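/- For every positive integer n, 2^n · (n+1)^{n-1} = Σ_b n! · Σ_{α ⊆ V(b)} Π_{v ∈ α} 1/h(v), where the outer sum is over all unlabeled binary trees b on n vertices, α ranges over all subsets of the vertex set of b, and h(v) denotes the number of descendants of v in b (including v itself). -/

import Mathlib

/-- Unlabeled binary trees: each vertex has an (optional) left and right subtree.
`nil` is the empty tree. -/
inductive UBT : Type
  | nil : UBT
  | node : UBT → UBT → UBT
deriving DecidableEq

/-- Number of vertices of an unlabeled binary tree. -/
def UBT.size : UBT → ℕ
  | .nil => 0
  | .node l r => l.size + r.size + 1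

/-- The vertex set of an unlabeled binary tree, encoded as root-to-vertex paths
(`false` = step to the left child, `true` = step to the right child). -/
def UBT.verts : UBT → Finset (List Bool)
  | .nil => ∅
  | .node l r => insert [] ((l.verts.image (List.cons false)) ∪ (r.verts.image (List.cons true)))

/-- The descendant subtree at a given position, so for a vertex `v` of `b`,
`h(v) = ((b.sub v).size`, the number of descendants of `v` (including `v`). -/
def UBT.sub : UBT → List Bool → UBT
  | t, [] => t
  | .nil, _ => .nil
  | .node l r, b :: p => if b then r.sub p else l.sub p

/-- The (finite) set of all unlabeled binary trees on `n` vertices. -/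
def treesOfSize : ℕ → Finset UBT
  | 0 => {UBT.nil}
  | n + 1 =>
      (Finset.range (n + 1)).attach.biUnion fun i =>
        ((treesOfSize i.1) ×ˢ (treesOfSize (n - i.1))).image fun p => UBT.node p.1 p.2
decreasing_by
  all_goals (have := i.2; simp only [Finset.mem_range] at this; omega)

/-- Normalised Abel polynomials `x (x+n)^(n-1) / n!`. -/
noncomputable def abelPoly : ℕ → Polynomial ℚ
  | 0 => 1
  | n + 1 => Polynomial.C (1 / ((n + 1).factorial : ℚ)) *
      (Polynomial.X * (Polynomial.X + Polynomial.C ((n : ℚ) + 1)) ^ n)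

theorem abelPoly_derivative (n : ℕ) :
    Polynomial.derivative (abelPoly (n + 1)) = (abelPoly n).comp (Polynomial.X + 1) := by
  cases n with
  | zero => simp [abelPoly]
  | succ m =>
    have h : Polynomial.C (1 / ((m + 1 + 1).factorial : ℚ)) * Polynomial.C ((m : ℚ) + 2)
        = Polynomial.C (1 / ((m + 1).factorial : ℚ)) := by
      rw [← Polynomial.C_mul]
      congr 1
      have : ((m + 1).factorial : ℚ) ≠ 0 := by positivity
      have h2 : ((m : ℚ) + 1 + 1) ≠ 0 := by positivity
      rw [Nat.factorial_succ (m + 1)]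
      push_cast
      field_simp
      ring
    simp only [abelPoly]
    rw [← h]
    simp only [Polynomial.derivative_mul, Polynomial.derivative_C, Polynomial.derivative_X,
      Polynomial.derivative_pow, Polynomial.derivative_add, Polynomial.mul_comp,
      Polynomial.C_comp, Polynomial.X_comp, Polynomial.pow_comp, Polynomial.add_comp]
    simp only [map_add, map_one, map_natCast, Nat.add_sub_cancel, Nat.cast_add, Nat.cast_one,
      map_ofNat]
    ring

theorem abelPoly_eval_zero (n : ℕ) : (abelPoly (n + 1)).eval 0 = 0 := by
  simp [abelPoly]

theorem poly_ext_derivative (p q : Polynomial ℚ)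
    (h : Polynomial.derivative p = Polynomial.derivative q) (h0 : p.eval 0 = q.eval 0) :
    p = q := by
  have h1 : Polynomial.derivative (p - q) = 0 := by rw [Polynomial.derivative_sub, h, sub_self]
  have h2 := Polynomial.eq_C_of_derivative_eq_zero h1
  rw [Polynomial.coeff_zero_eq_eval_zero, Polynomial.eval_sub, h0, sub_self, map_zero] at h2
  exact sub_eq_zero.mp h2

theorem abelPoly_binomial (n : ℕ) (y : ℚ) :
    ∑ p ∈ Finset.HasAntidiagonal.antidiagonal n, abelPoly p.1 * Polynomial.C ((abelPoly p.2).eval y)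
      = (abelPoly n).comp (Polynomial.X + Polynomial.C y) := by
  induction n with
  | zero => simp [abelPoly]
  | succ n ih =>
    apply poly_ext_derivative
    · rw [Finset.Nat.sum_antidiagonal_succ, Polynomial.derivative_add, Polynomial.derivative_sum]
      simp only [Polynomial.derivative_mul, Polynomial.derivative_C, abelPoly_derivative,
        mul_zero, add_zero, Polynomial.derivative_comp]
      have := congrArg (fun p => p.comp (Polynomial.X + 1)) ih
      simp only [Polynomial.sum_comp, Polynomial.mul_comp, Polynomial.C_comp] at this
      rw [this, Polynomial.comp_assoc, Polynomial.comp_assoc]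
      simp [abelPoly]
      congr 1
      ring
    · rw [Finset.Nat.sum_antidiagonal_succ]
      simp only [Polynomial.eval_add, Polynomial.eval_finsetSum, Polynomial.eval_mul,
        abelPoly_eval_zero, zero_mul, Finset.sum_const_zero, Polynomial.eval_comp]
      simp [abelPoly]

theorem UBT.size_of_mem (n : ℕ) : ∀ b ∈ treesOfSize n, b.size = n := by
  induction n using Nat.strong_induction_on with
  | _ n ih =>
    cases n with
    | zero => intro b hb; rw [treesOfSize] at hb; simp at hb; subst hb; rfl
    | succ n =>
      intro b hb
      rw [treesOfSize] at hb
      simp only [Finset.mem_biUnion, Finset.mem_image, Finset.mem_product] at hb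
      obtain ⟨i, -, p, ⟨h1, h2⟩, rfl⟩ := hb
      have hi := Finset.mem_range.mp i.2
      have e1 := ih i.1 hi _ h1
      have e2 := ih (n - i.1) (by omega) _ h2
      simp only [UBT.size, e1, e2]
      omega

/-- The hook weight of a tree. -/
def UBT.wt (b : UBT) : ℚ := ∏ v ∈ b.verts, (1 + 1 / ((b.sub v).size : ℚ))

theorem UBT.wt_node (l r : UBT) : (UBT.node l r).wt =
    (1 + 1 / ((l.size + r.size + 1 : ℕ) : ℚ)) * (l.wt * r.wt) := by
  unfold UBT.wt
  rw [UBT.verts, Finset.prod_insert (by simp), Finset.prod_union, Finset.prod_image (by simp),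
    Finset.prod_image (by simp)]
  · simp [UBT.sub, UBT.size]
  · rw [Finset.disjoint_left]
    simp only [Finset.mem_image]
    rintro _ ⟨a, -, rfl⟩ ⟨b, -, h⟩
    simp at h

theorem sum_wt_succ (n : ℕ) : ∑ b ∈ treesOfSize (n + 1), b.wt =
    (1 + 1 / ((n : ℚ) + 1)) * ∑ p ∈ Finset.HasAntidiagonal.antidiagonal n,
      (∑ b ∈ treesOfSize p.1, b.wt) * (∑ b ∈ treesOfSize p.2, b.wt) := by
  rw [Finset.Nat.sum_antidiagonal_eq_sum_range_succ
    (fun i j => (∑ b ∈ treesOfSize i, b.wt) * (∑ b ∈ treesOfSize j, b.wt)), treesOfSize,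
    Finset.sum_biUnion, Finset.mul_sum, ← Finset.sum_attach (Finset.range (n + 1))]
  · apply Finset.sum_congr rfl
    rintro ⟨i, hi⟩ -
    have hi := Finset.mem_range.mp hi
    rw [Finset.sum_image, Finset.sum_mul_sum, ← Finset.sum_product', Finset.mul_sum]
    · apply Finset.sum_congr rfl
      rintro ⟨l, r⟩ h
      rw [Finset.mem_product] at h
      rw [UBT.wt_node, UBT.size_of_mem _ _ h.1, UBT.size_of_mem _ _ h.2]
      have : i + (n - i) + 1 = n + 1 := by omega
      simp only [this]
      push_cast
      rfl
    · rintro ⟨a, b⟩ - ⟨c, d⟩ - h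
      simpa using h
  · rintro i - j - hij
    simp only [Function.onFun]
    rw [Finset.disjoint_left]
    simp only [Finset.mem_image, Finset.mem_product]
    rintro _ ⟨p, ⟨hp, -⟩, rfl⟩ ⟨q, ⟨hq, -⟩, h⟩
    simp only [UBT.node.injEq] at h
    apply hij
    apply Subtype.ext
    rw [← UBT.size_of_mem _ _ hp, ← UBT.size_of_mem _ _ hq, h.1]

theorem sum_wt_eq (n : ℕ) :
    ∑ b ∈ treesOfSize n, b.wt = 2 ^ n * (abelPoly n).eval 1 := by
  induction n using Nat.strong_induction_on with
  | _ n ih =>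
    cases n with
    | zero => simp [treesOfSize, UBT.wt, UBT.verts, abelPoly]
    | succ n =>
      rw [sum_wt_succ]
      have h1 : ∑ p ∈ Finset.HasAntidiagonal.antidiagonal n,
          (∑ b ∈ treesOfSize p.1, b.wt) * (∑ b ∈ treesOfSize p.2, b.wt)
          = 2 ^ n * ∑ p ∈ Finset.HasAntidiagonal.antidiagonal n,
            (abelPoly p.1).eval 1 * (abelPoly p.2).eval 1 := by
        rw [Finset.mul_sum]
        apply Finset.sum_congr rfl
        intro p hp
        have hp := Finset.HasAntidiagonal.mem_antidiagonal.mp hp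
        rw [ih p.1 (by omega), ih p.2 (by omega), ← hp, pow_add]
        ring
      have h2 := congrArg (Polynomial.eval 1) (abelPoly_binomial n 1)
      simp only [Polynomial.eval_finsetSum, Polynomial.eval_mul, Polynomial.eval_C,
        Polynomial.eval_comp, Polynomial.eval_add, Polynomial.eval_X] at h2
      rw [h1, h2]
      cases n with
      | zero => simp [abelPoly]; norm_num
      | succ m =>
        simp only [abelPoly, Polynomial.eval_mul, Polynomial.eval_C,
          Polynomial.eval_pow, Polynomial.eval_add, Polynomial.eval_X]
        rw [Nat.factorial_succ (m + 1)]
        have : ((m + 1).factorial : ℚ) ≠ 0 := by positivity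
        have h2 : ((m : ℚ) + 1 + 1) ≠ 0 := by positivity
        push_cast
        field_simp
        ring

/-- **Postnikov's identity, expanded form.** For every positive integer `n`,
`2^n (n+1)^(n-1) = Σ_b n! Σ_{α ⊆ V(b)} Π_{v ∈ α} 1/h(v)`, where `b` ranges over
unlabeled binary trees on `n` vertices and `h(v)` is the number of descendants of `v`. -/
theorem postnikov_expanded (n : ℕ) (hn : 0 < n) :
    (2 ^ n * (n + 1) ^ (n - 1) : ℚ) =
      ∑ b ∈ treesOfSize n, (n.factorial : ℚ) *
        ∑ α ∈ b.verts.powerset, ∏ v ∈ α, (1 : ℚ) / ((b.sub v).size : ℚ) := by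
  have hw : ∀ b : UBT, ∑ α ∈ b.verts.powerset, ∏ v ∈ α, (1 : ℚ) / ((b.sub v).size : ℚ) = b.wt := by
    intro b
    rw [UBT.wt, Finset.prod_one_add]
  simp only [hw]
  rw [← Finset.mul_sum, sum_wt_eq]
  obtain ⟨m, rfl⟩ : ∃ m, n = m + 1 := ⟨n - 1, by omega⟩
  have : ((m + 1).factorial : ℚ) ≠ 0 := by positivity
  simp only [abelPoly, Polynomial.eval_mul, Polynomial.eval_C,
    Polynomial.eval_pow, Polynomial.eval_add, Polynomial.eval_X, Nat.add_sub_cancel]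
  push_cast
  field_simp
  ring
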